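/- For every n ≥ 4, every sequence of at least 3n − 3 distinct real numbers contains a subsequence R′ of length at least n such that every run of R′, except possibly the first run and the last run, has odd length (and length at least 3). (This is the combinatorial core of the theorem that any path of n vertices has an x-monotone straight-through drawing on any set of at least 3n − 3 points in general orthogonal position.) -/

import Mathlib

/-- `IsRun t i j` says that the contiguous block `t i, t (i+1), …, t j` is a
*run* of the finite sequence `t`: it is strictly increasing or strictly
decreasing, and it is maximal with this property among contiguous blocks. -/
def IsRun {m : ℕ} (t : Fin m → ℝ) (i j : Fin m) : Prop :=
  i ≤ j ∧
  (StrictMonoOn t (Set.Icc i j) ∨ StrictAntiOn t (Set.Icc i j)) ∧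
  ∀ i' j' : Fin m, i' ≤ i → j ≤ j' → (i ≠ i' ∨ j ≠ j') →
    ¬ (StrictMonoOn t (Set.Icc i' j') ∨ StrictAntiOn t (Set.Icc i' j'))

/-- A *rollercoaster* is a finite sequence of distinct real numbers with at
least three terms in which every run has length (`j - i + 1`) at least 3. -/
def IsRollercoaster {m : ℕ} (t : Fin m → ℝ) : Prop :=
  3 ≤ m ∧ Function.Injective t ∧
  ∀ i j : Fin m, IsRun t i j → (i : ℕ) + 2 ≤ (j : ℕ)

/-!
Colour a pair of positions `p < q` by whether `s p < s q`. It suffices to find, in a 2-coloured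
complete graph on `3 * L + 2` ordered vertices, an increasing path with more than `L` steps whose
colour changes only at vertices of one parity: an inner run then begins and ends at changes of
colour, hence at vertices of the same parity.

Let `t q` be the length of a longest such path ending at `q` at which a change of colour is allowed,
and `u b q` that of a longest one which has to leave `q` with the colour `b` of its last step.
Appending a vertex gives `t p < u (r p q) q` and `u (r p q) p < t q` for `p < q`. If `t q` does not
exceed all earlier values of `t`, then the colour `b` of the pair formed by `q` and the earlier
vertex maximizing `t` satisfies `t p < u b q` for all `p ≤ q`. Among the vertices with that property
for a fixed `b`, the value `max (t q) (u (!b) q)` is positive and strictly increasing. If all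
lengths are at most `L`, there are thus at most `L + 1` vertices at which `t` attains a new maximum
and at most `L` others for each of the two colours.
-/

section Paths

variable {ι : Type*} [LinearOrder ι] {r : ι → ι → Bool} {g : ℕ → ι} {b : Bool} {p q : ι}
  {k e e' : ℕ}

/-- `g 0 < g 1 < ⋯ < g k` is a path with `k` steps whose colour, where `r p q` is the colour of the
pair `p < q`, changes only at vertices `g i` with `i` congruent to `e` modulo 2. The values of `g`
beyond `k` are irrelevant. -/
structure IsParityPath (r : ι → ι → Bool) (g : ℕ → ι) (k e : ℕ) : Prop where
  lt_add_one : ∀ i < k, g i < g (i + 1)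
  mod_two_eq_of_ne : ∀ i, i + 2 ≤ k → r (g i) (g (i + 1)) ≠ r (g (i + 1)) (g (i + 2)) →
    (i + 1) % 2 = e % 2

/-- Some parity path with `k` steps ends at `q` and may change its colour there. -/
def EndsFree (r : ι → ι → Bool) (q : ι) (k : ℕ) : Prop :=
  ∃ g, g k = q ∧ IsParityPath r g k k

/-- Some parity path with `k` steps ends at `q`, where it may not change its colour, and its last
step, if there is one, has colour `b`. -/
def EndsForced (r : ι → ι → Bool) (b : Bool) (q : ι) (k : ℕ) : Prop :=
  ∃ g, g k = q ∧ IsParityPath r g k (k + 1) ∧ ∀ i, i + 1 = k → r (g i) (g k) = b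

theorem isParityPath_zero (r : ι → ι → Bool) (g : ℕ → ι) (e : ℕ) : IsParityPath r g 0 e :=
  ⟨fun i hi => absurd hi (by omega), fun i hi => absurd hi (by omega)⟩

theorem IsParityPath.congr (h : IsParityPath r g k e) (he : e % 2 = e' % 2) :
    IsParityPath r g k e' :=
  ⟨h.lt_add_one, fun i hi hne => (h.mod_two_eq_of_ne i hi hne).trans he⟩

theorem IsParityPath.of_add_one (h : IsParityPath r g (k + 1) e) : IsParityPath r g k e :=
  ⟨fun i hi => h.lt_add_one i (by omega), fun i hi => h.mod_two_eq_of_ne i (by omega)⟩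

theorem IsParityPath.strictMonoOn (h : IsParityPath r g k e) : StrictMonoOn g (Set.Iic k) :=
  strictMonoOn_of_lt_add_one Set.ordConnected_Iic fun i _ _ hi => h.lt_add_one i hi

theorem IsParityPath.append (h : IsParityPath r g k e) (hq : g k < q)
    (hturn : ∀ i, i + 1 = k → r (g i) (g k) ≠ r (g k) q → k % 2 = e % 2) :
    IsParityPath r (Function.update g (k + 1) q) (k + 1) e := by
  have update_eq (i : ℕ) (hi : i ≤ k) : Function.update g (k + 1) q i = g i :=
    Function.update_of_ne (by omega) _ _
  refine ⟨fun i hi => ?_, fun i hi => ?_⟩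
  · rcases Nat.lt_succ_iff_lt_or_eq.1 hi with hik | rfl
    · simpa only [update_eq i hik.le, update_eq (i + 1) hik] using h.lt_add_one i hik
    · simpa only [update_eq i le_rfl, Function.update_self] using hq
  · rw [update_eq i (by omega), update_eq (i + 1) (by omega)]
    rcases Nat.lt_or_ge (i + 1) k with hik | hik
    · rw [update_eq (i + 2) hik]
      exact h.mod_two_eq_of_ne i hik
    · obtain rfl : k = i + 1 := by omega
      rw [Function.update_self]
      exact hturn i rfl

theorem endsFree_zero (r : ι → ι → Bool) (q : ι) : EndsFree r q 0 :=
  ⟨fun _ => q, rfl, isParityPath_zero r _ 0⟩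

theorem endsForced_zero (r : ι → ι → Bool) (b : Bool) (q : ι) : EndsForced r b q 0 :=
  ⟨fun _ => q, rfl, isParityPath_zero r _ 1, fun i hi => absurd hi (by omega)⟩

theorem EndsFree.endsForced (h : EndsFree r p k) (hpq : p < q) :
    EndsForced r (r p q) q (k + 1) := by
  obtain ⟨g, rfl, hg⟩ := h
  refine ⟨_, Function.update_self .., (hg.append hpq fun _ _ _ => rfl).congr (by omega),
    fun i hi => ?_⟩
  obtain rfl : i = k := by omega
  rw [Function.update_of_ne (by omega), Function.update_self]

theorem EndsForced.endsFree (h : EndsForced r (r p q) p k) (hpq : p < q) :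
    EndsFree r q (k + 1) := by
  obtain ⟨g, rfl, hg, hlast⟩ := h
  exact ⟨_, Function.update_self .., hg.append hpq fun i hi hne => absurd (hlast i hi) hne⟩

theorem EndsForced.exists_endsFree (h : EndsForced r b q (k + 1)) : ∃ p < q, EndsFree r p k := by
  obtain ⟨g, rfl, hg, -⟩ := h
  exact ⟨g k, hg.lt_add_one k k.lt_succ_self, g, rfl, hg.of_add_one.congr (by omega)⟩

end Paths

theorem ncard_le_of_strictMonoOn {ι : Type*} [LinearOrder ι] {s : Set ι} {f : ι → ℕ} {a c : ℕ}
    (hf : StrictMonoOn f s) (hs : Set.MapsTo f s (Set.Icc a c)) : s.ncard ≤ c + 1 - a :=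
  (Set.ncard_le_ncard_of_injOn f hs hf.injOn).trans_eq (Set.ncard_Icc_nat a c)

section LongestPaths

variable {ι : Type*} [LinearOrder ι] {r : ι → ι → Bool} {g : ℕ → ι} {b : Bool} {p q : ι}
  {k e L : ℕ}

/-- The largest number of steps of a parity path that ends at `q` and may change its colour
there; it is 0 if there are arbitrarily long ones, as can happen for infinite `ι`. -/
noncomputable def freeLength (r : ι → ι → Bool) (q : ι) : ℕ :=
  sSup {k | EndsFree r q k}

/-- The largest number of steps of a parity path that ends at `q` and has to leave it with
colour `b`, with the same convention as in `freeLength`. -/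
noncomputable def forcedLength (r : ι → ι → Bool) (b : Bool) (q : ι) : ℕ :=
  sSup {k | EndsForced r b q k}

/-- The colour `b` leads at `q`: the longest path that has to leave `q` with colour `b` is longer
than every free path ending at `q` or before. -/
def IsLeading (r : ι → ι → Bool) (b : Bool) (q : ι) : Prop :=
  ∀ p ≤ q, freeLength r p < forcedLength r b q

variable [Finite ι]

theorem IsParityPath.lt_card (h : IsParityPath r g k e) : k < Nat.card ι := by
  have := Set.ncard_le_ncard_of_injOn (t := Set.univ) g (fun _ _ => Set.mem_univ _)
    h.strictMonoOn.injOn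
  rw [Set.ncard_univ] at this
  simpa [Set.ncard_eq_toFinset_card'] using this

theorem bddAbove_endsFree (r : ι → ι → Bool) (q : ι) : BddAbove {k | EndsFree r q k} :=
  ⟨Nat.card ι, fun _ ⟨_, _, hg⟩ => hg.lt_card.le⟩

theorem bddAbove_endsForced (r : ι → ι → Bool) (b : Bool) (q : ι) :
    BddAbove {k | EndsForced r b q k} :=
  ⟨Nat.card ι, fun _ ⟨_, _, hg, _⟩ => hg.lt_card.le⟩

theorem endsFree_freeLength (r : ι → ι → Bool) (q : ι) : EndsFree r q (freeLength r q) :=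
  Nat.sSup_mem ⟨0, endsFree_zero r q⟩ (bddAbove_endsFree r q)

theorem endsForced_forcedLength (r : ι → ι → Bool) (b : Bool) (q : ι) :
    EndsForced r b q (forcedLength r b q) :=
  Nat.sSup_mem ⟨0, endsForced_zero r b q⟩ (bddAbove_endsForced r b q)

theorem freeLength_lt_forcedLength (r : ι → ι → Bool) (hpq : p < q) :
    freeLength r p < forcedLength r (r p q) q :=
  le_csSup (bddAbove_endsForced r _ q) ((endsFree_freeLength r p).endsForced hpq)

theorem forcedLength_lt_freeLength (r : ι → ι → Bool) (hpq : p < q) :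
    forcedLength r (r p q) p < freeLength r q :=
  le_csSup (bddAbove_endsFree r q) ((endsForced_forcedLength r _ p).endsFree hpq)

theorem forcedLength_le_of_forall_lt (h : ∀ p < q, freeLength r p < k) :
    forcedLength r b q ≤ k := by
  have hlongest := endsForced_forcedLength r b q
  rcases hl : forcedLength r b q with _ | l
  · exact Nat.zero_le k
  · rw [hl] at hlongest
    obtain ⟨p, hpq, hp⟩ := hlongest.exists_endsFree
    exact (le_csSup (bddAbove_endsFree r p) hp).trans_lt (h p hpq)

theorem forall_freeLength_lt_or_exists_isLeading (r : ι → ι → Bool) (q : ι) :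
    (∀ p < q, freeLength r p < freeLength r q) ∨ ∃ b, IsLeading r b q := by
  refine or_iff_not_imp_left.2 fun hrecord => ?_
  push Not at hrecord
  obtain ⟨p₀, hp₀, hle⟩ := hrecord
  obtain ⟨p, hp, hmax⟩ :=
    Set.exists_max_image (Set.Iio q) (freeLength r) (Set.toFinite _) ⟨p₀, hp₀⟩
  refine ⟨r p q, fun x hx => lt_of_le_of_lt ?_ (freeLength_lt_forcedLength r hp)⟩
  rcases hx.eq_or_lt with rfl | hx
  · exact hle.trans (hmax p₀ hp₀)
  · exact hmax x hx

theorem IsLeading.freeLength_pos (h : IsLeading r b q) : 0 < freeLength r q := by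
  by_contra! hzero
  have hmin (p : ι) : ¬ p < q := fun hpq =>
    absurd (forcedLength_lt_freeLength r hpq) (hzero.trans (Nat.zero_le _)).not_gt
  have hle : forcedLength r b q ≤ 0 := forcedLength_le_of_forall_lt fun p hpq => absurd hpq (hmin p)
  exact (Nat.zero_le _).not_gt ((h q le_rfl).trans_le hle)

theorem strictMonoOn_max_freeLength_forcedLength (r : ι → ι → Bool) (b : Bool) :
    StrictMonoOn (fun q => max (freeLength r q) (forcedLength r (!b) q)) {q | IsLeading r b q} := by
  intro p hp q _ hpq
  have hforced := forcedLength_lt_freeLength r hpq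
  by_cases hr : r p q = b
  · rw [hr] at hforced
    have hother : forcedLength r (!b) p ≤ forcedLength r b p :=
      forcedLength_le_of_forall_lt fun x hx => hp x hx.le
    exact lt_max_of_lt_left ((max_le (hp p le_rfl).le hother).trans_lt hforced)
  · have hfree := freeLength_lt_forcedLength r hpq
    rw [Bool.eq_not_of_ne hr] at hforced hfree
    exact max_lt (lt_max_of_lt_right hfree) (lt_max_of_lt_left hforced)

theorem ncard_isLeading_le (b : Bool) (hfree : ∀ q, freeLength r q ≤ L)
    (hforced : ∀ q, forcedLength r (!b) q ≤ L) : {q | IsLeading r b q}.ncard ≤ L :=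
  ncard_le_of_strictMonoOn (strictMonoOn_max_freeLength_forcedLength r b) (a := 1) fun q hq =>
    ⟨le_max_of_le_left (IsLeading.freeLength_pos hq), max_le (hfree q) (hforced q)⟩

theorem card_le_of_length_le (hfree : ∀ q, freeLength r q ≤ L)
    (hforced : ∀ b q, forcedLength r b q ≤ L) : Nat.card ι ≤ 3 * L + 1 := by
  let records : Set ι := {q | ∀ p < q, freeLength r p < freeLength r q}
  let leading (b : Bool) : Set ι := {q | IsLeading r b q}
  have hrecords : records.ncard ≤ L + 1 :=
    ncard_le_of_strictMonoOn (f := freeLength r) (a := 0) (fun p _ q hq hpq => hq p hpq)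
      fun q _ => ⟨Nat.zero_le _, hfree q⟩
  have hleading (b : Bool) : (leading b).ncard ≤ L :=
    ncard_isLeading_le b hfree (hforced !b)
  have hcover : records ∪ (leading true ∪ leading false) = Set.univ :=
    Set.eq_univ_of_forall fun q => by
      simpa [records, leading, or_comm] using forall_freeLength_lt_or_exists_isLeading r q
  calc Nat.card ι = (records ∪ (leading true ∪ leading false)).ncard := by
        rw [hcover, Set.ncard_univ]
    _ ≤ records.ncard + ((leading true).ncard + (leading false).ncard) :=
        (Set.ncard_union_le _ _).trans (Nat.add_le_add_left (Set.ncard_union_le _ _) _)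
    _ ≤ 3 * L + 1 := by
        have := hleading true
        have := hleading false
        omega

theorem exists_isParityPath (r : ι → ι → Bool) (hcard : 3 * L + 2 ≤ Nat.card ι) :
    ∃ g k e, L < k ∧ IsParityPath r g k e := by
  by_contra! hshort
  have hfree (q : ι) : freeLength r q ≤ L := by
    obtain ⟨g, -, hg⟩ := endsFree_freeLength r q
    exact le_of_not_gt fun hL => hshort g _ _ hL hg
  have hforced (b : Bool) (q : ι) : forcedLength r b q ≤ L := by
    obtain ⟨g, -, hg, -⟩ := endsForced_forcedLength r b q
    exact le_of_not_gt fun hL => hshort g _ _ hL hg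
  have := card_le_of_length_le hfree hforced
  omega

end LongestPaths

section Runs

theorem strictMonoOn_Icc_of_covBy {α β : Type*} [PartialOrder α] [Preorder β] {f : α → β} {a b : α}
    (hab : a ⋖ b) (hf : f a < f b) : StrictMonoOn f (Set.Icc a b) := by
  rw [hab.Icc_eq]
  rintro x (rfl | rfl) y (rfl | rfl) hxy
  exacts [absurd hxy (lt_irrefl _), hf, absurd hxy hab.lt.asymm, absurd hxy (lt_irrefl _)]

theorem strictAntiOn_Icc_of_covBy {α β : Type*} [PartialOrder α] [Preorder β] {f : α → β} {a b : α}
    (hab : a ⋖ b) (hf : f b < f a) : StrictAntiOn f (Set.Icc a b) :=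
  (strictMonoOn_Icc_of_covBy (f := OrderDual.toDual ∘ f) hab hf).dual_right

variable {m : ℕ} {t : Fin m → ℝ} {a b i j : Fin m}

theorem IsRun.lt (ht : Function.Injective t) (h : IsRun t i j) (hjb : j ⋖ b) : i < j := by
  obtain ⟨hij, -, hmax⟩ := h
  refine hij.lt_of_ne ?_
  rintro rfl
  refine hmax i b le_rfl hjb.le (Or.inr hjb.ne) ?_
  exact (ht.ne hjb.ne).lt_or_gt.imp (strictMonoOn_Icc_of_covBy hjb) (strictAntiOn_Icc_of_covBy hjb)

theorem IsRun.turn_left (ht : Function.Injective t) (h : IsRun t i j) (hai : a ⋖ i) (hib : i < b)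
    (hbj : b ≤ j) : ¬ (t a < t i ↔ t i < t b) := by
  obtain ⟨hij, hrun, hmax⟩ := h
  have hnot := hmax a j hai.le le_rfl (Or.inl hai.ne')
  rw [← Set.Icc_union_Icc_eq_Icc hai.le hij] at hnot
  have hi : i ∈ Set.Icc i j := ⟨le_rfl, hij⟩
  have hb : b ∈ Set.Icc i j := ⟨hib.le, hbj⟩
  intro hiff
  rcases hrun with hmono | hanti
  · exact hnot <| Or.inl <| (strictMonoOn_Icc_of_covBy hai (hiff.2 (hmono hi hb hib))).union hmono
      (isGreatest_Icc hai.le) (isLeast_Icc hij)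
  · have hle : t i ≤ t a := not_lt.1 (hiff.not.2 (hanti hi hb hib).asymm)
    exact hnot <| Or.inr <| (strictAntiOn_Icc_of_covBy hai (hle.lt_of_ne (ht.ne hai.ne'))).union
      hanti (isGreatest_Icc hai.le) (isLeast_Icc hij)

theorem IsRun.turn_right (ht : Function.Injective t) (h : IsRun t i j) (hia : i ≤ a) (haj : a < j)
    (hjb : j ⋖ b) : ¬ (t a < t j ↔ t j < t b) := by
  obtain ⟨hij, hrun, hmax⟩ := h
  have hnot := hmax i b le_rfl hjb.le (Or.inr hjb.ne)
  rw [← Set.Icc_union_Icc_eq_Icc hij hjb.le] at hnot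
  have ha : a ∈ Set.Icc i j := ⟨hia, haj.le⟩
  have hj : j ∈ Set.Icc i j := ⟨hij, le_rfl⟩
  intro hiff
  rcases hrun with hmono | hanti
  · exact hnot <| Or.inl <| hmono.union (strictMonoOn_Icc_of_covBy hjb (hiff.1 (hmono ha hj haj)))
      (isGreatest_Icc hij) (isLeast_Icc hjb.le)
  · have hle : t b ≤ t j := not_lt.1 (hiff.not.1 (hanti ha hj haj).asymm)
    exact hnot <| Or.inr <| hanti.union
      (strictAntiOn_Icc_of_covBy hjb (hle.lt_of_ne (ht.ne hjb.ne')))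
      (isGreatest_Icc hij) (isLeast_Icc hjb.le)

theorem IsRun.odd_length_of_turns_mod_two {e : ℕ} (ht : Function.Injective t)
    (hturn : ∀ a i b : Fin m, a ⋖ i → i ⋖ b → ¬ (t a < t i ↔ t i < t b) → (i : ℕ) % 2 = e % 2)
    (h : IsRun t i j) (hi : (i : ℕ) ≠ 0) (hj : (j : ℕ) ≠ m - 1) :
    Odd ((j : ℕ) - (i : ℕ) + 1) ∧ 3 ≤ (j : ℕ) - (i : ℕ) + 1 := by
  have exists_covBy_left (x : Fin m) (hx : (x : ℕ) ≠ 0) : ∃ y, y ⋖ x :=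
    ⟨⟨x - 1, by omega⟩, by simp only [Fin.covBy_iff, Nat.covBy_iff_add_one_eq]; omega⟩
  have exists_covBy_right (x : Fin m) (hx : (x : ℕ) ≠ m - 1) : ∃ y, x ⋖ y :=
    ⟨⟨x + 1, by omega⟩, by simp only [Fin.covBy_iff, Nat.covBy_iff_add_one_eq]⟩
  obtain ⟨b, hjb⟩ := exists_covBy_right j hj
  have hij : i < j := h.lt ht hjb
  obtain ⟨a, hai⟩ := exists_covBy_left i hi
  obtain ⟨i', hii'⟩ := exists_covBy_right i (by omega)
  obtain ⟨j', hjj'⟩ := exists_covBy_left j (by omega)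
  have hleft := hturn a i i' hai hii' (h.turn_left ht hai hii'.lt (hii'.ge_of_gt hij))
  have hright := hturn j' j b hjj' hjb (h.turn_right ht (hjj'.le_of_lt hij) hjj'.lt hjb)
  exact ⟨Nat.odd_iff.2 (by omega), by omega⟩

end Runs

theorem IsParityPath.mod_two_eq_of_turn {ι : Type*} [LinearOrder ι] {s : ι → ℝ} {g : ℕ → ι}
    {k e : ℕ} (hg : IsParityPath (fun p q => decide (s p < s q)) g k e) {a i b : Fin (k + 1)}
    (hai : a ⋖ i) (hib : i ⋖ b) (hturn : ¬ (s (g a) < s (g i) ↔ s (g i) < s (g b))) :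
    (i : ℕ) % 2 = e % 2 := by
  simp only [Fin.covBy_iff, Nat.covBy_iff_add_one_eq] at hai hib
  rw [← hib, ← hai] at hturn
  rw [← hai]
  exact hg.mod_two_eq_of_ne a (by omega) (decide_eq_decide.not.2 hturn)

theorem statement8_general (n : ℕ) (hn : 2 ≤ n) (N : ℕ) (hN : 3 * n - 4 ≤ N)
    (s : Fin N → ℝ) (hs : Function.Injective s) :
    ∃ (m : ℕ) (f : Fin m → Fin N), StrictMono f ∧ Function.Injective (s ∘ f) ∧ n ≤ m ∧
      ∀ i j : Fin m, IsRun (s ∘ f) i j → (i : ℕ) ≠ 0 → (j : ℕ) ≠ m - 1 →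
        Odd ((j : ℕ) - (i : ℕ) + 1) ∧ 3 ≤ (j : ℕ) - (i : ℕ) + 1 := by
  have hcard : 3 * (n - 2) + 2 ≤ Nat.card (Fin N) := by
    rw [Nat.card_fin]
    omega
  obtain ⟨g, k, e, hk, hg⟩ := exists_isParityPath (fun p q => decide (s p < s q)) hcard
  let f : Fin (k + 1) → Fin N := fun i => g i
  have hf : StrictMono f := fun i j hij => hg.strictMonoOn i.is_le j.is_le hij
  have hsf : Function.Injective (s ∘ f) := hs.comp hf.injective
  refine ⟨k + 1, f, hf, hsf, by omega, fun i j hrun hi hj => ?_⟩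
  exact hrun.odd_length_of_turns_mod_two hsf (fun _ _ _ => hg.mod_two_eq_of_turn) hi hj

/-- For every `n ≥ 4`, every sequence of at least `3n − 3` distinct real
numbers contains a subsequence `R'` of length at least `n` in which every
run, except possibly the first and the last, has odd length at least 3. -/
theorem statement8 (n : ℕ) (hn : 4 ≤ n) (N : ℕ) (hN : 3 * n - 3 ≤ N)
    (s : Fin N → ℝ) (hs : Function.Injective s) :
    ∃ (m : ℕ) (f : Fin m → Fin N), StrictMono f ∧ Function.Injective (s ∘ f) ∧ n ≤ m ∧
      ∀ i j : Fin m, IsRun (s ∘ f) i j → (i : ℕ) ≠ 0 → (j : ℕ) ≠ m - 1 →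
        Odd ((j : ℕ) - (i : ℕ) + 1) ∧ 3 ≤ (j : ℕ) - (i : ℕ) + 1 :=
  statement8_general n (by omega) N (by omega) s hs
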